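/- arXiv:2010.00277 — 2 statements merged into one kernel-verified Lean document; each statement's English description precedes it below -/
import Mathlib

section
/- Let L ⊆ Sⁿ be a Jordan subalgebra of (Sⁿ, •_U) with unit U ∈ L invertible and with dim L = 3. Then there exist X, Y ∈ L such that {U, X, Y} is a basis of L and (writing • for •_U) exactly one of the following multiplication tables holds: 1(a): X•X = X, Y•Y = Y, X•Y = 0; 1(b): X•X = U, Y•Y = U, X•Y = 0; 2(a): X•X = X, Y•Y = 0, X•Y = 0; 2(b): X•X = X, Y•Y = 0, X•Y = Y/2; 3(a): X•X = Y, Y•Y = 0, X•Y = 0; 3(b): X•X = 0, Y•Y = 0, X•Y = 0. -/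
open Matrix

noncomputable section

abbrev Mat (n : ℕ) := Matrix (Fin n) (Fin n) ℂ

/-- The Jordan product on symmetric matrices with unit `U`. -/
def jmul {n : ℕ} (U X Y : Mat n) : Mat n :=
  (1 / 2 : ℂ) • (X * U⁻¹ * Y + Y * U⁻¹ * X)

/-!
The Jordan product `•_U` makes `L` a three-dimensional unital Jordan algebra over an algebraically
closed field, and such an algebra `J` falls into one of two families.

* Some `a` has `1, a, a²` independent. Then `J` is spanned by the powers of `a`, hence is
  determined by the cubic that annihilates `a`: three simple roots, one double root, or a triple
  root give 1(a), 2(a), 3(a).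
* Every `a` satisfies a quadratic equation. Completing squares splits `J` as `K · 1 ⊕ V`, where the
  product of two elements of the plane `V` is a scalar; the resulting symmetric bilinear form on `V`
  has rank two, one, or zero, which gives 1(b), 2(b), 3(b).
-/

section LinearAlgebra

theorem linearIndependent_triple_iff {R M : Type*} [Ring R] [AddCommGroup M] [Module R M]
    {u v w : M} : LinearIndependent R ![u, v, w] ↔
      ∀ a b c : R, a • u + b • v + c • w = 0 → a = 0 ∧ b = 0 ∧ c = 0 := by
  rw [Fintype.linearIndependent_iff]
  refine ⟨fun h a b c habc ↦ ?_, fun h g hg ↦ ?_⟩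
  · have hzero := h ![a, b, c] (by simpa [Fin.sum_univ_three] using habc)
    exact ⟨hzero 0, hzero 1, hzero 2⟩
  · simpa [Fin.forall_fin_succ] using h (g 0) (g 1) (g 2) (by simpa [Fin.sum_univ_three] using hg)

variable {K V : Type*} [Field K] [AddCommGroup V] [Module K V]

theorem span_triple_eq_of_finrank_eq_three {L : Submodule K V} (hL : Module.finrank K L = 3)
    {u v w : V} (hu : u ∈ L) (hv : v ∈ L) (hw : w ∈ L) (h : LinearIndependent K ![u, v, w]) :
    Submodule.span K {u, v, w} = L := by
  have : FiniteDimensional K L := Module.finite_of_finrank_eq_succ hL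
  refine Submodule.eq_of_le_of_finrank_eq ?_ ?_
  · rw [Submodule.span_le]
    rintro x (rfl | rfl | rfl) <;> assumption
  · have hrange : Set.range ![u, v, w] = {u, v, w} := by
      simp only [Matrix.range_cons, Matrix.range_empty, Set.union_empty, Set.singleton_union]
    rw [hL, ← hrange, finrank_span_eq_card h, Fintype.card_fin]

theorem exists_eq_smul_add_smul_add_smul_of_finrank_eq_three (hV : Module.finrank K V = 3)
    {u v w : V} (h : LinearIndependent K ![u, v, w]) (x : V) :
    ∃ a b c : K, x = a • u + b • v + c • w := by
  have hx : x ∈ Submodule.span K {u, v, w} := by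
    have htop : Module.finrank K (⊤ : Submodule K V) = 3 := by rwa [finrank_top]
    rw [span_triple_eq_of_finrank_eq_three htop trivial trivial trivial h]
    trivial
  obtain ⟨a, b, c, habc⟩ := Submodule.mem_span_triple.1 hx
  exact ⟨a, b, c, habc.symm⟩

theorem linearIndependent_triple_iff_notMem_span {u v w : V} :
    LinearIndependent K ![u, v, w] ↔ LinearIndependent K ![u, v] ∧ w ∉ Submodule.span K {u, v} := by
  have hsnoc : (![u, v, w] : Fin 3 → V) = Fin.snoc ![u, v] w := by
    ext i
    fin_cases i <;> rfl
  rw [hsnoc, linearIndependent_finSnoc, Matrix.range_cons_cons_empty]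

theorem exists_linearIndependent_triple_of_two_lt_finrank (hV : 2 < Module.finrank K V) {u : V}
    (hu : u ≠ 0) : ∃ v w : V, LinearIndependent K ![u, v, w] := by
  obtain ⟨v, huv⟩ := exists_linearIndependent_pair_of_one_lt_finrank (R := K) (by lia) hu
  obtain ⟨w, huvw⟩ := exists_linearIndependent_snoc_of_lt_finrank huv hV
  have hw := (linearIndependent_finSnoc.1 huvw).2
  rw [Matrix.range_cons_cons_empty] at hw
  exact ⟨v, w, linearIndependent_triple_iff_notMem_span.2 ⟨huv, hw⟩⟩

end LinearAlgebra

section ProductTable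

variable (K : Type*) {V : Type*} [Field K] [AddCommGroup V] [Module K V]

/-- The six multiplication tables, in the order 1(a), 1(b), 2(a), 2(b), 3(a), 3(b), of a commutative
product `•` with unit `u` on the span of `u, x, y`; a table is encoded as the triple
`(x • x, y • y, x • y)`. -/
def productTable (u x y : V) : Fin 6 → V × V × V :=
  ![(x, y, 0), (u, u, 0), (x, 0, 0), (x, 0, (1 / 2 : K) • y), (y, 0, 0), (0, 0, 0)]

variable {K}

theorem map_productTable {W : Type*} [AddCommGroup W] [Module K W] (f : V →ₗ[K] W) (u x y : V)
    (i : Fin 6) : (productTable K u x y i).map f (Prod.map f f) =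
      productTable K (f u) (f x) (f y) i := by
  fin_cases i <;> simp [productTable]

theorem productTable_injective [NeZero (2 : K)] {u x y : V}
    (h : LinearIndependent K ![u, x, y]) : Function.Injective (productTable K u x y) := by
  have hx : x ≠ 0 := h.ne_zero 1
  have hy : y ≠ 0 := h.ne_zero 2
  have hu : u ≠ 0 := h.ne_zero 0
  have hux : u ≠ x := h.injective.ne (a₁ := 0) (a₂ := 1) (by decide)
  have huy : u ≠ y := h.injective.ne (a₁ := 0) (a₂ := 2) (by decide)
  have hxy : x ≠ y := h.injective.ne (a₁ := 1) (a₂ := 2) (by decide)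
  have h2 : (2 : K) ≠ 0 := two_ne_zero
  intro i j hij
  fin_cases i <;> fin_cases j <;> simp_all [productTable, eq_comm]

theorem eq_productTable_iff {u x y p q r : V} (i : Fin 6) :
    (p, q, r) = productTable K u x y i ↔
      ![p = x ∧ q = y ∧ r = 0, p = u ∧ q = u ∧ r = 0, p = x ∧ q = 0 ∧ r = 0,
        p = x ∧ q = 0 ∧ r = (1 / 2 : K) • y, p = y ∧ q = 0 ∧ r = 0, p = 0 ∧ q = 0 ∧ r = 0] i := by
  fin_cases i <;> simp [productTable]

end ProductTable

section JordanAlgebra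

variable (K J : Type*) [Field K] [NonAssocCommRing J] [Module K J]

/-- `J` has elements `x, y` independent of its unit that multiply according to the `i`-th of the six
tables of `productTable`. -/
def HasProductTable (i : Fin 6) : Prop :=
  ∃ x y : J, LinearIndependent K ![1, x, y] ∧ (x * x, y * y, x * y) = productTable K 1 x y i

variable {K J}

/-- `a` generates a three-dimensional algebra in which it is annihilated by the cubic
`(X - α) (X - β) (X - γ)`. -/
structure IsCubicGenerator (a : J) (α β γ : K) : Prop where
  linearIndependent : LinearIndependent K ![1, a, a * a]
  cube_eq : a * (a * a) =
    (α + β + γ) • (a * a) - (α * β + β * γ + γ * α) • a + (α * β * γ) • 1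

/-- `v` and `w` span, together with `1`, the Jordan algebra of the symmetric bilinear form on the
plane `⟨v, w⟩` with Gram matrix `!![α, γ; γ, β]`. -/
structure IsGramPair (v w : J) (α β γ : K) : Prop where
  linearIndependent : LinearIndependent K ![1, v, w]
  mul_self_left : v * v = α • 1
  mul_self_right : w * w = β • 1
  mul_eq : v * w = γ • 1

section Cubic

theorem IsCubicGenerator.rotate {a : J} {α β γ : K} (h : IsCubicGenerator a α β γ) :
    IsCubicGenerator a β γ α := by
  refine ⟨h.linearIndependent, ?_⟩
  rw [h.cube_eq]
  module

theorem exists_isCubicGenerator [IsAlgClosed K] (hJ : Module.finrank K J = 3) {a : J}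
    (h : LinearIndependent K ![1, a, a * a]) : ∃ α β γ : K, IsCubicGenerator a α β γ := by
  obtain ⟨t, s, r, hcube⟩ :=
    exists_eq_smul_add_smul_add_smul_of_finrank_eq_three hJ h (a * (a * a))
  let P : Cubic K := ⟨1, -r, -s, -t⟩
  have hP : P.a ≠ 0 := one_ne_zero
  obtain ⟨α, β, γ, hroots⟩ :=
    (Cubic.splits_iff_roots_eq_three (φ := RingHom.id K) hP).1 (IsAlgClosed.splits _)
  have hr : -r = 1 * -(α + β + γ) := Cubic.b_eq_three_roots hP hroots
  have hs : -s = 1 * (α * β + α * γ + β * γ) := Cubic.c_eq_three_roots hP hroots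
  have ht : -t = 1 * -(α * β * γ) := Cubic.d_eq_three_roots hP hroots
  obtain rfl : r = α + β + γ := by linear_combination -hr
  obtain rfl : s = -(α * β + α * γ + β * γ) := by linear_combination -hs
  obtain rfl : t = α * β * γ := by linear_combination -ht
  exact ⟨α, β, γ, h, by rw [hcube]; module⟩

variable [IsScalarTower K J J] [SMulCommClass K J J]

theorem IsCubicGenerator.smul_sub {a : J} {α β γ : K} (h : IsCubicGenerator a α β γ) {c : K}
    (hc : c ≠ 0) (t : K) :
    IsCubicGenerator (c • (a - t • 1)) (c * (α - t)) (c * (β - t)) (c * (γ - t)) := by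
  have hsq : c • (a - t • 1) * c • (a - t • 1) =
      (c ^ 2) • (a * a) - (2 * t * c ^ 2) • a + (t ^ 2 * c ^ 2) • 1 := by
    simp only [sub_mul, mul_sub, smul_mul_assoc, mul_smul_comm, mul_one, one_mul]
    module
  constructor
  · rw [hsq, linearIndependent_triple_iff]
    intro x y z hxyz
    obtain ⟨h₁, ha, haa⟩ := linearIndependent_triple_iff.1 h.linearIndependent
      (x - y * c * t + z * t ^ 2 * c ^ 2) (y * c - z * (2 * t * c ^ 2)) (z * c ^ 2)
      (by rw [← hxyz]; module)
    obtain rfl : z = 0 := by simpa [hc] using haa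
    obtain rfl : y = 0 := by simpa [hc] using ha
    exact ⟨by simpa using h₁, rfl, rfl⟩
  · rw [hsq]
    simp only [sub_mul, mul_sub, mul_add, smul_mul_assoc, mul_smul_comm, mul_one, one_mul,
      h.cube_eq]
    module

variable [IsCommJordan J]

theorem IsCubicGenerator.hasProductTable_of_triple_root {a : J} {α : K}
    (h : IsCubicGenerator a α α α) : HasProductTable K J 4 := by
  obtain ⟨b, hb⟩ : ∃ b : J, IsCubicGenerator b (0 : K) 0 0 :=
    ⟨_, by simpa using h.smul_sub one_ne_zero α⟩
  have hcube : b * (b * b) = 0 := by simpa using hb.cube_eq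
  have hfourth : b * b * (b * b) = 0 := by
    rw [IsCommJordan.lmul_comm_rmul_rmul, hcube, mul_zero]
  exact ⟨b, b * b, hb.linearIndependent, by simp [productTable, hcube, hfourth]⟩

theorem IsCubicGenerator.hasProductTable_of_double_root {a : J} {α β : K}
    (h : IsCubicGenerator a α α β) (hαβ : α ≠ β) : HasProductTable K J 2 := by
  obtain ⟨b, hb⟩ : ∃ b : J, IsCubicGenerator b (0 : K) 0 1 := by
    have hβα : β - α ≠ 0 := sub_ne_zero.2 hαβ.symm
    exact ⟨_, by simpa [hβα] using h.smul_sub (inv_ne_zero hβα) α⟩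
  have hcube : b * (b * b) = b * b := by simpa using hb.cube_eq
  have hfourth : b * b * (b * b) = b * b := by
    rw [IsCommJordan.lmul_comm_rmul_rmul, hcube, hcube]
  refine ⟨b * b, b - b * b, ?_, ?_⟩
  · rw [linearIndependent_triple_iff]
    intro x y z hxyz
    obtain ⟨hx, hz, hyz⟩ := linearIndependent_triple_iff.1 hb.linearIndependent x z (y - z)
      (by rw [← hxyz]; module)
    exact ⟨hx, by linear_combination hyz + hz, hz⟩
  · simp [productTable, mul_sub, sub_mul, mul_comm (b * b) b, hcube, hfourth]

theorem IsCubicGenerator.hasProductTable_of_roots_zero_one {b : J} {μ : K}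
    (h : IsCubicGenerator b 0 1 μ) (hμ₀ : μ ≠ 0) (hμ₁ : μ ≠ 1) : HasProductTable K J 0 := by
  have hcube : b * (b * b) = (1 + μ) • (b * b) - μ • b := by
    rw [h.cube_eq]
    module
  have hfourth : b * b * (b * b) = (1 + μ) • ((1 + μ) • (b * b) - μ • b) - μ • (b * b) := by
    simp only [IsCommJordan.lmul_comm_rmul_rmul b b, hcube, mul_sub, mul_smul_comm]
  have hμ₁' : 1 - μ ≠ 0 := sub_ne_zero.2 hμ₁.symm
  -- The Lagrange idempotents: each is the value at `b` of the quadratic that takes the value `1` at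
  -- one of the roots `1` and `μ` and vanishes at the other two roots.
  let p : K := (1 - μ)⁻¹
  let q : K := -(μ * (1 - μ))⁻¹
  refine ⟨p • (b * b - μ • b), q • (b * b - b), ?_, ?_⟩
  · rw [linearIndependent_triple_iff]
    intro x y z hxyz
    obtain ⟨hx, hb, hbb⟩ := linearIndependent_triple_iff.1 h.linearIndependent x
      (-(y * p * μ) - z * q) (y * p + z * q) (by rw [← hxyz]; module)
    have hp : p ≠ 0 := inv_ne_zero hμ₁'
    have hq : q ≠ 0 := neg_ne_zero.2 (inv_ne_zero (mul_ne_zero hμ₀ hμ₁'))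
    have hy : y * (p * (1 - μ)) = 0 := by linear_combination hb + hbb
    obtain rfl : y = 0 := by simpa [hp, hμ₁'] using hy
    obtain rfl : z = 0 := by simpa [hq] using hbb
    exact ⟨hx, rfl, rfl⟩
  · simp only [productTable, p, q, Matrix.cons_val, Prod.mk.injEq, mul_sub, sub_mul,
      smul_mul_assoc, mul_smul_comm, mul_comm (b * b) b, hcube, hfourth]
    refine ⟨?_, ?_, ?_⟩ <;> match_scalars <;> field_simp <;> ring

theorem IsCubicGenerator.hasProductTable_of_simple_roots {a : J} {α β γ : K}
    (h : IsCubicGenerator a α β γ) (hαβ : α ≠ β) (hαγ : α ≠ γ) (hβγ : β ≠ γ) :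
    HasProductTable K J 0 := by
  have hβα : β - α ≠ 0 := sub_ne_zero.2 hαβ.symm
  have hγα : γ - α ≠ 0 := sub_ne_zero.2 hαγ.symm
  have hb : IsCubicGenerator ((β - α)⁻¹ • (a - α • 1)) 0 1 ((β - α)⁻¹ * (γ - α)) := by
    simpa [hβα] using h.smul_sub (inv_ne_zero hβα) α
  refine hb.hasProductTable_of_roots_zero_one (mul_ne_zero (inv_ne_zero hβα) hγα) fun h₁ ↦ hβγ ?_
  rw [inv_mul_eq_one₀ hβα] at h₁
  linear_combination h₁

theorem IsCubicGenerator.exists_hasProductTable {a : J} {α β γ : K}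
    (h : IsCubicGenerator a α β γ) : ∃ i, HasProductTable K J i := by
  by_cases hαβ : α = β
  · subst hαβ
    by_cases hαγ : α = γ
    · subst hαγ
      exact ⟨4, h.hasProductTable_of_triple_root⟩
    · exact ⟨2, h.hasProductTable_of_double_root hαγ⟩
  by_cases hαγ : α = γ
  · subst hαγ
    exact ⟨2, h.rotate.rotate.hasProductTable_of_double_root hαβ⟩
  by_cases hβγ : β = γ
  · subst hβγ
    exact ⟨2, h.rotate.hasProductTable_of_double_root (Ne.symm hαβ)⟩
  exact ⟨0, h.hasProductTable_of_simple_roots hαβ hαγ hβγ⟩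

end Cubic

section Gram

theorem IsGramPair.symm {v w : J} {α β γ : K} (h : IsGramPair v w α β γ) :
    IsGramPair w v β α γ where
  linearIndependent := linearIndependent_triple_iff.2 fun x y z hxyz ↦ by
    obtain ⟨hx, hz, hy⟩ := linearIndependent_triple_iff.1 h.linearIndependent x z y
      (by rw [← hxyz]; module)
    exact ⟨hx, hy, hz⟩
  mul_self_left := h.mul_self_right
  mul_self_right := h.mul_self_left
  mul_eq := by rw [mul_comm, h.mul_eq]

theorem IsGramPair.hasProductTable_of_zero {v w : J} (h : IsGramPair v w (0 : K) 0 0) :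
    HasProductTable K J 5 :=
  ⟨v, w, h.linearIndependent,
    by simp [productTable, h.mul_self_left, h.mul_self_right, h.mul_eq]⟩

theorem IsGramPair.hasProductTable_of_one_one {v w : J} (h : IsGramPair v w (1 : K) 1 0) :
    HasProductTable K J 1 :=
  ⟨v, w, h.linearIndependent,
    by simp [productTable, h.mul_self_left, h.mul_self_right, h.mul_eq]⟩

variable [IsScalarTower K J J] [SMulCommClass K J J]

theorem IsGramPair.smul_left {v w : J} {α β γ : K} (h : IsGramPair v w α β γ) {c : K}
    (hc : c ≠ 0) : IsGramPair (c • v) w (c ^ 2 * α) β (c * γ) where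
  linearIndependent := linearIndependent_triple_iff.2 fun x y z hxyz ↦ by
    obtain ⟨hx, hy, hz⟩ := linearIndependent_triple_iff.1 h.linearIndependent x (y * c) z
      (by rw [← hxyz]; module)
    exact ⟨hx, (mul_eq_zero.1 hy).resolve_right hc, hz⟩
  mul_self_left := by
    rw [smul_mul_assoc, mul_smul_comm, h.mul_self_left]
    module
  mul_self_right := h.mul_self_right
  mul_eq := by rw [smul_mul_assoc, h.mul_eq, smul_smul]

theorem IsGramPair.add_smul {v w : J} {α β γ : K} (h : IsGramPair v w α β γ) (t : K) :
    IsGramPair v (w + t • v) α (β + 2 * t * γ + t ^ 2 * α) (γ + t * α) where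
  linearIndependent := linearIndependent_triple_iff.2 fun x y z hxyz ↦ by
    obtain ⟨hx, hy, rfl⟩ := linearIndependent_triple_iff.1 h.linearIndependent x (y + z * t) z
      (by rw [← hxyz]; module)
    exact ⟨hx, by simpa using hy, rfl⟩
  mul_self_left := h.mul_self_left
  mul_self_right := by
    simp only [mul_add, add_mul, smul_mul_assoc, mul_smul_comm, mul_comm w v, h.mul_self_left,
      h.mul_self_right, h.mul_eq]
    module
  mul_eq := by
    rw [mul_add, mul_smul_comm, h.mul_eq, h.mul_self_left]
    module

theorem IsGramPair.hasProductTable_of_one_zero [NeZero (2 : K)] {v w : J}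
    (h : IsGramPair v w (1 : K) 0 0) : HasProductTable K J 3 := by
  have h2 : (2 : K) ≠ 0 := two_ne_zero
  refine ⟨(1 / 2 : K) • (1 + v), w, ?_, ?_⟩
  · rw [linearIndependent_triple_iff]
    intro x y z hxyz
    obtain ⟨hx, hy, hz⟩ := linearIndependent_triple_iff.1 h.linearIndependent
      (x + y * (1 / 2)) (y * (1 / 2)) z (by rw [← hxyz]; module)
    obtain rfl : y = 0 := by simpa [h2] using hy
    exact ⟨by simpa using hx, rfl, hz⟩
  · have hidem : (1 / 2 : K) • (1 + v) * (1 / 2 : K) • (1 + v) = (1 / 2 : K) • (1 + v) := by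
      simp only [mul_add, add_mul, smul_mul_assoc, mul_smul_comm, mul_one, one_mul,
        h.mul_self_left]
      match_scalars <;> field_simp <;> ring
    have hmul : (1 / 2 : K) • (1 + v) * w = (1 / 2 : K) • w := by
      rw [smul_mul_assoc, add_mul, one_mul, h.mul_eq, zero_smul, add_zero]
    rw [hidem, h.mul_self_right, hmul, zero_smul]
    rfl

section IsAlgClosed

variable [IsAlgClosed K]

theorem IsGramPair.exists_left_eq_one {v w : J} {α β γ : K} (h : IsGramPair v w α β γ)
    (hα : α ≠ 0) : ∃ (v' : J) (c : K), IsGramPair v' w 1 β (c * γ) := by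
  obtain ⟨c, rfl⟩ := IsAlgClosed.exists_eq_mul_self α
  have hc : c ≠ 0 := left_ne_zero_of_mul hα
  have hnorm : c⁻¹ ^ 2 * (c * c) = 1 := by field_simp
  exact ⟨c⁻¹ • v, c⁻¹, hnorm ▸ h.smul_left (inv_ne_zero hc)⟩

variable [NeZero (2 : K)]

theorem IsGramPair.exists_hasProductTable_of_left_ne_zero {v w : J} {α β γ : K}
    (h : IsGramPair v w α β γ) (hα : α ≠ 0) : ∃ i, HasProductTable K J i := by
  obtain ⟨v₁, c, h₁⟩ := h.exists_left_eq_one hα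
  obtain ⟨w₁, δ, h₂⟩ : ∃ (w₁ : J) (δ : K), IsGramPair v₁ w₁ 1 δ 0 :=
    ⟨_, _, by simpa using h₁.add_smul (-(c * γ))⟩
  by_cases hδ : δ = 0
  · subst hδ
    exact ⟨3, h₂.hasProductTable_of_one_zero⟩
  · obtain ⟨w₂, d, h₃⟩ := h₂.symm.exists_left_eq_one hδ
    rw [mul_zero] at h₃
    exact ⟨1, h₃.hasProductTable_of_one_one⟩

theorem IsGramPair.exists_hasProductTable {v w : J} {α β γ : K} (h : IsGramPair v w α β γ) :
    ∃ i, HasProductTable K J i := by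
  by_cases hα : α = 0
  · by_cases hβ : β = 0
    · subst hα hβ
      by_cases hγ : γ = 0
      · subst hγ
        exact ⟨5, h.hasProductTable_of_zero⟩
      -- Polarization: if both diagonal entries vanish, then `(w + v)² = 2γ`.
      · exact (h.add_smul 1).symm.exists_hasProductTable_of_left_ne_zero
          (by simpa using mul_ne_zero two_ne_zero hγ)
    · exact h.symm.exists_hasProductTable_of_left_ne_zero hβ
  · exact h.exists_hasProductTable_of_left_ne_zero hα

end IsAlgClosed

end Gram

section Quadratic

theorem exists_mul_self_eq_smul_add_smul_one [IsScalarTower K J J] {a : J}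
    (h : ¬ LinearIndependent K ![1, a, a * a]) : ∃ s t : K, a * a = s • a + t • 1 := by
  rcases subsingleton_or_nontrivial J with _ | _
  · exact ⟨0, 0, Subsingleton.elim _ _⟩
  by_cases ha : LinearIndependent K ![1, a]
  · have hmem : a * a ∈ Submodule.span K {1, a} := by
      by_contra hmem
      exact h (linearIndependent_triple_iff_notMem_span.2 ⟨ha, hmem⟩)
    obtain ⟨t, s, hst⟩ := Submodule.mem_span_pair.1 hmem
    exact ⟨s, t, by rw [← hst, add_comm]⟩
  · rw [LinearIndependent.pair_iff' one_ne_zero] at ha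
    push Not at ha
    obtain ⟨c, rfl⟩ := ha
    exact ⟨c, 0, by rw [smul_mul_assoc, one_mul, zero_smul, add_zero]⟩

variable [NeZero (2 : K)]

theorem exists_mul_eq_smul_one_of_quadratic
    (hquad : ∀ a : J, ∃ s t : K, a * a = s • a + t • 1) {v w : J}
    (h : LinearIndependent K ![1, v, w]) {α β : K} (hv : v * v = α • 1) (hw : w * w = β • 1) :
    ∃ γ : K, v * w = γ • 1 := by
  have h2 : (2 : K) ≠ 0 := two_ne_zero
  obtain ⟨s, t, hst⟩ := hquad (v + w)
  obtain ⟨s', t', hst'⟩ := hquad (v - w)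
  have hadd : (v + w) * (v + w) = (α + β) • 1 + (2 : K) • (v * w) := by
    simp only [add_mul, mul_add, mul_comm w v, hv, hw]
    module
  have hsub : (v - w) * (v - w) = (α + β) • 1 - (2 : K) • (v * w) := by
    simp only [sub_mul, mul_sub, mul_comm w v, hv, hw]
    module
  have hparallelogram :
      (t + t' - 2 * (α + β)) • 1 + (s + s') • v + (s - s') • w = (0 : J) := by
    linear_combination (norm := module) hadd + hsub - hst - hst'
  obtain ⟨-, hplus, hminus⟩ := linearIndependent_triple_iff.1 h _ _ _ hparallelogram
  obtain rfl : s = 0 := by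
    have : 2 * s = 0 := by linear_combination hplus + hminus
    simpa [h2] using this
  have htwo : (2 : K) • (v * w) = (t - (α + β)) • 1 := by
    linear_combination (norm := module) hst - hadd
  exact ⟨2⁻¹ * (t - (α + β)), by rw [mul_smul, ← htwo, inv_smul_smul₀ h2]⟩

variable [IsScalarTower K J J] [SMulCommClass K J J]

theorem exists_sub_smul_one_mul_self_eq_smul_one {a : J} {s t : K} (h : a * a = s • a + t • 1) :
    ∃ c d : K, (a - c • 1) * (a - c • 1) = d • (1 : J) := by
  have h2 : (2 : K) ≠ 0 := two_ne_zero
  refine ⟨s / 2, t + (s / 2) ^ 2, ?_⟩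
  simp only [mul_sub, sub_mul, mul_smul_comm, smul_mul_assoc, mul_one, one_mul, h]
  match_scalars <;> field_simp <;> ring

theorem exists_isGramPair_of_quadratic (hJ : Module.finrank K J = 3)
    (hquad : ∀ a : J, ∃ s t : K, a * a = s • a + t • 1) :
    ∃ (v w : J) (α β γ : K), IsGramPair v w α β γ := by
  have : Nontrivial J := Module.nontrivial_of_finrank_pos (R := K) (by rw [hJ]; norm_num)
  obtain ⟨a, b, hab⟩ :=
    exists_linearIndependent_triple_of_two_lt_finrank (K := K) (by lia) (one_ne_zero (α := J))
  obtain ⟨s, t, hst⟩ := hquad a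
  obtain ⟨s', t', hst'⟩ := hquad b
  obtain ⟨c, α, hα⟩ := exists_sub_smul_one_mul_self_eq_smul_one hst
  obtain ⟨d, β, hβ⟩ := exists_sub_smul_one_mul_self_eq_smul_one hst'
  have hindep : LinearIndependent K ![1, a - c • 1, b - d • 1] := by
    rw [linearIndependent_triple_iff]
    intro x y z hxyz
    obtain ⟨hx, rfl, rfl⟩ := linearIndependent_triple_iff.1 hab (x - y * c - z * d) y z
      (by rw [← hxyz]; module)
    exact ⟨by simpa using hx, rfl, rfl⟩
  obtain ⟨γ, hγ⟩ := exists_mul_eq_smul_one_of_quadratic hquad hindep hα hβ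
  exact ⟨_, _, α, β, γ, hindep, hα, hβ, hγ⟩

end Quadratic

theorem exists_hasProductTable [IsAlgClosed K] [NeZero (2 : K)] [IsScalarTower K J J]
    [SMulCommClass K J J] [IsCommJordan J] (hJ : Module.finrank K J = 3) :
    ∃ i, HasProductTable K J i := by
  by_cases hcyclic : ∃ a : J, LinearIndependent K ![1, a, a * a]
  · obtain ⟨a, ha⟩ := hcyclic
    obtain ⟨α, β, γ, h⟩ := exists_isCubicGenerator hJ ha
    exact h.exists_hasProductTable
  · push Not at hcyclic
    obtain ⟨v, w, α, β, γ, h⟩ := exists_isGramPair_of_quadratic hJ fun a ↦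
      exists_mul_self_eq_smul_add_smul_one (hcyclic a)
    exact h.exists_hasProductTable

end JordanAlgebra

section Matrix

variable {n : ℕ}

theorem jmul_comm (U X Y : Mat n) : jmul U X Y = jmul U Y X := by
  rw [jmul, jmul, add_comm]

theorem jmul_add (U X Y Z : Mat n) : jmul U X (Y + Z) = jmul U X Y + jmul U X Z := by
  simp only [jmul, Matrix.mul_add, Matrix.add_mul]
  module

theorem add_jmul (U X Y Z : Mat n) : jmul U (X + Y) Z = jmul U X Z + jmul U Y Z := by
  rw [jmul_comm, jmul_add, jmul_comm U Z X, jmul_comm U Z Y]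

theorem jmul_smul (U : Mat n) (c : ℂ) (X Y : Mat n) : jmul U X (c • Y) = c • jmul U X Y := by
  simp only [jmul, Matrix.mul_smul, Matrix.smul_mul]
  module

theorem smul_jmul (U : Mat n) (c : ℂ) (X Y : Mat n) : jmul U (c • X) Y = c • jmul U X Y := by
  rw [jmul_comm, jmul_smul, jmul_comm]

theorem jmul_zero (U X : Mat n) : jmul U X 0 = 0 := by
  simp [jmul]

theorem zero_jmul (U X : Mat n) : jmul U 0 X = 0 := by
  rw [jmul_comm, jmul_zero]

theorem jmul_unit {U : Mat n} (hU : IsUnit U.det) (X : Mat n) : jmul U X U = X := by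
  rw [jmul, Matrix.nonsing_inv_mul_cancel_right _ _ hU, Matrix.mul_nonsing_inv U hU, one_mul]
  module

theorem unit_jmul {U : Mat n} (hU : IsUnit U.det) (X : Mat n) : jmul U U X = X := by
  rw [jmul_comm, jmul_unit hU]

theorem jmul_jordan (U X Y : Mat n) :
    jmul U (jmul U X Y) (jmul U X X) = jmul U X (jmul U Y (jmul U X X)) := by
  simp only [jmul, Matrix.mul_add, Matrix.add_mul, Matrix.mul_smul, Matrix.smul_mul, mul_assoc]
  module

/-- A Jordan subalgebra, with unit the invertible matrix `U`, of the space of all `n × n` matrices,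
symmetric or not, under the product `jmul U`. It carries the ring structure through which the
classification of Jordan algebras is applied. -/
structure JordanSubalgebra (U : Mat n) extends Submodule ℂ (Mat n) where
  isUnit_det : IsUnit U.det
  unit_mem : U ∈ carrier
  jmul_mem : ∀ X ∈ carrier, ∀ Y ∈ carrier, jmul U X Y ∈ carrier

namespace JordanSubalgebra

variable {U : Mat n} (L : JordanSubalgebra U)

instance : NonAssocCommRing L.toSubmodule where
  mul X Y := ⟨jmul U X Y, L.jmul_mem X X.2 Y Y.2⟩
  one := ⟨U, L.unit_mem⟩
  mul_comm X Y := Subtype.ext (jmul_comm U X Y)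
  left_distrib X Y Z := Subtype.ext (jmul_add U X Y Z)
  right_distrib X Y Z := Subtype.ext (add_jmul U X Y Z)
  zero_mul X := Subtype.ext (zero_jmul U X)
  mul_zero X := Subtype.ext (jmul_zero U X)
  one_mul X := Subtype.ext (unit_jmul L.isUnit_det X)
  mul_one X := Subtype.ext (jmul_unit L.isUnit_det X)

instance : IsCommJordan L.toSubmodule where
  lmul_comm_rmul_rmul X Y := Subtype.ext (jmul_jordan U X Y)

instance : SMulCommClass ℂ L.toSubmodule L.toSubmodule where
  smul_comm c X Y := Subtype.ext (jmul_smul U c X Y).symm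

instance : IsScalarTower ℂ L.toSubmodule L.toSubmodule where
  smul_assoc c X Y := Subtype.ext (smul_jmul U c X Y)

theorem exists_jmul_eq_productTable (hL : Module.finrank ℂ L.toSubmodule = 3) :
    ∃ X ∈ L.toSubmodule, ∃ Y ∈ L.toSubmodule, ∃ i : Fin 6, LinearIndependent ℂ ![U, X, Y] ∧
      (jmul U X X, jmul U Y Y, jmul U X Y) = productTable ℂ U X Y i := by
  obtain ⟨i, x, y, hindep, htable⟩ := exists_hasProductTable (K := ℂ) (J := L.toSubmodule) hL
  refine ⟨x, x.2, y, y.2, i, ?_, ?_⟩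
  · have hcoe : ![U, ↑x, ↑y] = L.toSubmodule.subtype ∘ ![1, x, y] := by
      ext1 j
      fin_cases j <;> rfl
    rw [hcoe]
    exact hindep.map' _ (Submodule.ker_subtype _)
  · have hmap := congrArg (Prod.map L.toSubmodule.subtype
      (Prod.map L.toSubmodule.subtype L.toSubmodule.subtype)) htable
    rwa [map_productTable] at hmap

end JordanSubalgebra

end Matrix

theorem stmt6_general {n : ℕ} (U : Mat n) (hU : IsUnit U.det) (L : Submodule ℂ (Mat n))
    (hUL : U ∈ L) (hclosed : ∀ X ∈ L, ∀ Y ∈ L, jmul U X Y ∈ L)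
    (hdim : Module.finrank ℂ L = 3) :
    ∃ X ∈ L, ∃ Y ∈ L, LinearIndependent ℂ ![U, X, Y] ∧
      Submodule.span ℂ {U, X, Y} = L ∧
      (∃! i : Fin 6,
        ![jmul U X X = X ∧ jmul U Y Y = Y ∧ jmul U X Y = 0,
          jmul U X X = U ∧ jmul U Y Y = U ∧ jmul U X Y = 0,
          jmul U X X = X ∧ jmul U Y Y = 0 ∧ jmul U X Y = 0,
          jmul U X X = X ∧ jmul U Y Y = 0 ∧ jmul U X Y = (1 / 2 : ℂ) • Y,
          jmul U X X = Y ∧ jmul U Y Y = 0 ∧ jmul U X Y = 0,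
          jmul U X X = 0 ∧ jmul U Y Y = 0 ∧ jmul U X Y = 0] i) := by
  obtain ⟨X, hX, Y, hY, i, hindep, htable⟩ :=
    (JordanSubalgebra.mk L hU hUL hclosed).exists_jmul_eq_productTable hdim
  refine ⟨X, hX, Y, hY, hindep, span_triple_eq_of_finrank_eq_three hdim hUL hX hY hindep, ?_⟩
  simp only [← eq_productTable_iff]
  exact ⟨i, htable, fun j hj ↦ productTable_injective hindep (hj.symm.trans htable)⟩

/-- Every 3-dimensional Jordan subalgebra `L` of `(Sⁿ, •_U)` has a basis `{U, X, Y}`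
for which exactly one of the six multiplication tables
1(a), 1(b), 2(a), 2(b), 3(a), 3(b) of Theorem 2.7 holds. -/
theorem stmt6 {n : ℕ} (U : Mat n) (hU : IsUnit U.det)
    (L : Submodule ℂ (Mat n)) (hsym : ∀ X ∈ L, Matrix.IsSymm X)
    (hUL : U ∈ L) (hclosed : ∀ X ∈ L, ∀ Y ∈ L, jmul U X Y ∈ L)
    (hdim : Module.finrank ℂ L = 3) :
    ∃ X ∈ L, ∃ Y ∈ L, LinearIndependent ℂ ![U, X, Y] ∧
      Submodule.span ℂ {U, X, Y} = L ∧
      (∃! i : Fin 6,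
        ![ -- 1(a)
           jmul U X X = X ∧ jmul U Y Y = Y ∧ jmul U X Y = 0,
           -- 1(b)
           jmul U X X = U ∧ jmul U Y Y = U ∧ jmul U X Y = 0,
           -- 2(a)
           jmul U X X = X ∧ jmul U Y Y = 0 ∧ jmul U X Y = 0,
           -- 2(b)
           jmul U X X = X ∧ jmul U Y Y = 0 ∧ jmul U X Y = (1 / 2 : ℂ) • Y,
           -- 3(a)
           jmul U X X = Y ∧ jmul U Y Y = 0 ∧ jmul U X Y = 0,
           -- 3(b)
           jmul U X X = 0 ∧ jmul U Y Y = 0 ∧ jmul U X Y = 0 ] i) :=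
  stmt6_general U hU L hUL hclosed hdim
end
end

section
/- Let L ⊆ Sⁿ be a Jordan subalgebra of (Sⁿ, •_U) with unit U ∈ L invertible, and suppose U is primitive in L, i.e., there do not exist nonzero X₁, X₂ ∈ L with X₁ •_U X₁ = X₁, X₂ •_U X₂ = X₂, X₁ •_U X₂ = 0, and X₁ + X₂ = U. Then there exists an invertible P ∈ GL(n, ℂ) such that P L Pᵀ = ℂ·Jₙ ⊕ L′, where Jₙ is the n×n matrix with ones on the antidiagonal and zeros elsewhere, and L′ is a linear subspace of Sⁿ all of whose elements A satisfy A_{ij} = 0 whenever i + j ≥ n + 1 (upper anti-triangular matrices). -/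
open Matrix

noncomputable section

/-- Congruence by `P`, i.e. `X ↦ P X Pᵀ`, as a linear map. -/
def congMap {n : ℕ} (P : Mat n) : Mat n →ₗ[ℂ] Mat n where
  toFun X := P * X * Pᵀ
  map_add' := by intros; simp [Matrix.mul_add, Matrix.add_mul]
  map_smul' := by intros; simp [Matrix.mul_smul, Matrix.smul_mul]

/-- `Jₙ`, the `n × n` matrix with ones on the antidiagonal and zeros elsewhere
(`0`-indexed: entry `(i,j)` is `1` iff `i + j = n - 1`). -/
def Jmat (n : ℕ) : Mat n :=
  Matrix.of fun i j => if (i : ℕ) + (j : ℕ) = n - 1 then 1 else 0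

/-!
Multiplying by `U⁻¹` turns `L` into a space `M` of operators that is closed under `ab + ba`,
contains `1`, and consists of operators self-adjoint for the bilinear form `U`. As `1` is primitive,
Fitting's lemma makes every `a ∈ M` a unit or nilpotent, hence a scalar plus a nilpotent.

The nilpotent elements form a subspace `N`: if `a` and `b` are nilpotent and `a + b` is a unit,
choose an invertible `s ∈ M`, a polynomial in `a + b`, with `s (a + b) s = 1`; then `s a s` and
`1 - s a s = s b s` lie in `M` and are not invertible, so both are nilpotent, which is absurd. By
an argument of Jacobson, a Jordan-closed space of nilpotent elements is nilpotent as a whole: take a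
maximal nilpotent subspace `K ≤ N` and, if `K ≠ N`, an element `x ∈ N` outside `K` with
`ax + xa ∈ K` for all `a ∈ K`; then `K + span {x}` is still nilpotent.

Finally, in dimension at least two, some nonzero isotropic vector is killed by `N`: any nonzero
vector in the image of the last nonzero power of `N`, or any isotropic vector if `N = 0`. Completing
it to a hyperbolic pair and passing to the orthogonal complement gives, by induction, a basis in
which `U` is the exchange matrix and `N` is anti-triangular.
-/

section OrderedMonoid

variable {S : Type*} [Monoid S] [Preorder S] [MulLeftMono S] [MulRightMono S] {k c : S}

theorem mul_pow_le_pow_mul_of_mul_le (h : k * c ≤ c * k) (m : ℕ) : k * c ^ m ≤ c ^ m * k := by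
  induction m with
  | zero => simp
  | succ m ih =>
    calc k * c ^ (m + 1) = k * c ^ m * c := by rw [pow_succ, mul_assoc]
      _ ≤ c ^ m * k * c := by grw [ih]
      _ ≤ c ^ m * (c * k) := by grw [mul_assoc, h]
      _ = c ^ (m + 1) * k := by rw [pow_succ, mul_assoc]

theorem mul_pow_le_pow_mul_pow_of_mul_le (h : k * c ≤ c * k) (m : ℕ) :
    (c * k) ^ m ≤ c ^ m * k ^ m := by
  induction m with
  | zero => simp
  | succ m ih =>
    calc (c * k) ^ (m + 1) ≤ c * k * (c ^ m * k ^ m) := by grw [pow_succ', ih]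
      _ = c * (k * c ^ m) * k ^ m := by simp only [mul_assoc]
      _ ≤ c * (c ^ m * k) * k ^ m := by grw [mul_pow_le_pow_mul_of_mul_le h m]
      _ = c ^ (m + 1) * k ^ (m + 1) := by simp only [pow_succ', mul_assoc]

end OrderedMonoid

section IdempotentSemiring

variable {S : Type*} [IdemSemiring S] {a b k : S}

theorem isNilpotent_of_le (hb : IsNilpotent b) (h : a ≤ b) : IsNilpotent a := by
  obtain ⟨m, hm⟩ := hb
  exact ⟨m, le_antisymm (hm ▸ pow_le_pow_left' h m) zero_le⟩

theorem add_pow_le_pow_add_of_mul_le {c : S} (one_le : 1 ≤ c) (add_le : k + b ≤ c)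
    (hk : k * c ≤ c * k) (i : ℕ) : (k + b) ^ i ≤ b ^ i + c ^ i * k := by
  induction i with
  | zero => simp
  | succ i ih =>
    have b_pow_le : b ^ i ≤ c ^ i := pow_le_pow_left' (le_add_self.trans add_le) i
    calc (k + b) ^ (i + 1) ≤ (b ^ i + c ^ i * k) * (k + b) := by grw [pow_succ, ih]
      _ = b ^ (i + 1) + (b ^ i * k + c ^ i * k * (k + b)) := by noncomm_ring
      _ ≤ b ^ (i + 1) + (c ^ i * k + c ^ i * (k * c)) := by grw [b_pow_le, mul_assoc, add_le]
      _ ≤ b ^ (i + 1) + (c ^ i * c * k + c ^ i * c * k) := by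
        grw [hk, ← mul_assoc]
        nth_grw 1 [← mul_one (c ^ i), one_le]
      _ = b ^ (i + 1) + c ^ (i + 1) * k := by rw [add_idem, ← pow_succ]

theorem isNilpotent_add_of_mul_le (hk : IsNilpotent k) (hb : IsNilpotent b)
    (h : k * b ≤ b * k + k) : IsNilpotent (k + b) := by
  obtain ⟨m, hm⟩ := hk
  obtain ⟨r, hr⟩ := hb
  obtain ⟨c, hc⟩ : ∃ c, c = 1 + (k + b) := ⟨_, rfl⟩
  have one_le : 1 ≤ c := hc ▸ le_self_add
  have add_le : k + b ≤ c := hc ▸ le_add_self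
  have k_mul_c : k * c ≤ c * k := by
    calc k * c = k + k * k + k * b := by rw [hc]; noncomm_ring
      _ ≤ k + k * k + (b * k + k) := by grw [h]
      _ = c * k + 1 * k := by rw [hc]; noncomm_ring
      _ ≤ c * k + c * k := by grw [one_le]
      _ = c * k := add_idem _
  have pow_r_le : (k + b) ^ r ≤ c ^ r * k := by
    simpa [hr] using add_pow_le_pow_add_of_mul_le one_le add_le k_mul_c r
  have isNilpotent_mul : IsNilpotent (c ^ r * k) := by
    refine ⟨m, le_antisymm ?_ zero_le⟩
    grw [mul_pow_le_pow_mul_pow_of_mul_le (mul_pow_le_pow_mul_of_mul_le k_mul_c r), hm, mul_zero]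
  exact (isNilpotent_of_le isNilpotent_mul pow_r_le).of_pow

end IdempotentSemiring

section NilpotentSubmodules

variable {R V : Type*} [CommSemiring R] [AddCommMonoid V] [Module R V]

theorem exists_mem_notMem_forall_apply_mem {T : Submodule R (Module.End R V)} (hT : IsNilpotent T)
    {K N : Submodule R V} (hTN : ∀ f ∈ T, ∀ x ∈ N, f x ∈ N) (hNK : ¬ N ≤ K) :
    ∃ x ∈ N, x ∉ K ∧ ∀ f ∈ T, f x ∈ K := by
  by_contra! escape
  have chain (i : ℕ) : ∃ x ∈ N, x ∉ K ∧ ∃ f ∈ T ^ i, ∃ y, f y = x := by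
    induction i with
    | zero =>
      obtain ⟨x, hxN, hxK⟩ := Set.not_subset.1 hNK
      exact ⟨x, hxN, hxK, 1, pow_zero T ▸ Submodule.one_le.1 le_rfl, x, rfl⟩
    | succ i ih =>
      obtain ⟨x, hxN, hxK, f, hf, y, rfl⟩ := ih
      obtain ⟨g, hg, hgK⟩ := escape _ hxN hxK
      exact ⟨_, hTN g hg _ hxN, hgK, g * f, pow_succ' T i ▸ Submodule.mul_mem_mul hg hf, y, rfl⟩
  obtain ⟨m, hm⟩ := hT
  obtain ⟨_, -, hxK, f, hf, y, rfl⟩ := chain m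
  obtain rfl : f = 0 := by simpa [hm] using hf
  exact hxK (by simp)

variable {E : Type*} [Semiring E] [Algebra R E]

theorem isNilpotent_map_mul_add_flip {K : Submodule R E} (hK : IsNilpotent K) :
    IsNilpotent (K.map (LinearMap.mul R E + (LinearMap.mul R E).flip)) := by
  let left : Submodule R (Module.End R E) := K.map (Algebra.lmul R E).toLinearMap
  let right : Submodule R (Module.End R E) :=
    (K.map (MulOpposite.opLinearEquiv R).toLinearMap).map
      (Algebra.lsmul R R E (A := Eᵐᵒᵖ)).toLinearMap
  obtain ⟨m, hm⟩ := hK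
  have left_nilpotent : IsNilpotent left := ⟨m, by simp [left, ← Submodule.map_pow, hm]⟩
  have right_nilpotent : IsNilpotent right := by
    refine ⟨m, ?_⟩
    rw [← Submodule.map_pow, ← Submodule.map_op_pow, hm]
    simp
  have left_right_commute : Commute left right := by
    apply le_antisymm <;> rw [Submodule.mul_le]
    · rintro _ ⟨a, ha, rfl⟩ _ ⟨_, ⟨b, hb, rfl⟩, rfl⟩
      exact (LinearMap.commute_mulLeft_right (R := R) a b).eq ▸
        Submodule.mul_mem_mul ⟨_, ⟨b, hb, rfl⟩, rfl⟩ ⟨a, ha, rfl⟩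
    · rintro _ ⟨_, ⟨b, hb, rfl⟩, rfl⟩ _ ⟨a, ha, rfl⟩
      exact (LinearMap.commute_mulLeft_right (R := R) a b).eq ▸
        Submodule.mul_mem_mul ⟨a, ha, rfl⟩ ⟨_, ⟨b, hb, rfl⟩, rfl⟩
  refine isNilpotent_of_le (left_right_commute.isNilpotent_add left_nilpotent right_nilpotent) ?_
  rintro _ ⟨a, ha, rfl⟩
  exact Submodule.add_mem_sup ⟨a, ha, rfl⟩ ⟨_, ⟨a, ha, rfl⟩, rfl⟩

end NilpotentSubmodules

/-- `IsJordanClosed N` says that the subspace `N` of an associative algebra is closed under the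
Jordan product `(a * b + b * a) / 2`; the factor `1 / 2` is dropped, so that the notion makes sense
in every characteristic. -/
def IsJordanClosed {R E : Type*} [CommSemiring R] [Semiring E] [Algebra R E]
    (N : Submodule R E) : Prop :=
  ∀ a ∈ N, ∀ b ∈ N, a * b + b * a ∈ N

section Jacobson

variable {R E : Type*} [CommRing R] [Ring E] [Algebra R E] {N : Submodule R E}

theorem isNilpotent_add_span_singleton {K : Submodule R E} (hK : IsNilpotent K) {x : E}
    (hx : IsNilpotent x) (h : ∀ a ∈ K, a * x + x * a ∈ K) :
    IsNilpotent (K + Submodule.span R {x}) := by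
  obtain ⟨r, hr⟩ := hx
  refine isNilpotent_add_of_mul_le hK ⟨r, by simp [Submodule.span_pow, hr]⟩ ?_
  rw [Submodule.mul_le]
  intro a ha _ hy
  obtain ⟨c, rfl⟩ := Submodule.mem_span_singleton.1 hy
  have : a * c • x = (c • x) * (-a) + c • (a * x + x * a) := by simp [smul_add]
  rw [this]
  exact Submodule.add_mem_sup (Submodule.mul_mem_mul hy (neg_mem ha)) (K.smul_mem _ (h a ha))

theorem IsJordanClosed.isNilpotent [IsNoetherian R E] (hN : IsJordanClosed N)
    (hnil : ∀ a ∈ N, IsNilpotent a) : IsNilpotent N := by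
  obtain ⟨K, hK⟩ := exists_maximal_of_wellFoundedGT (fun K ↦ K ≤ N ∧ IsNilpotent K)
    ⟨⊥, bot_le, 1, by simp⟩
  obtain ⟨hKN, hKnil⟩ := hK.prop
  by_cases hNK : N ≤ K
  · exact isNilpotent_of_le hKnil hNK
  obtain ⟨x, hxN, hxK, hx⟩ := exists_mem_notMem_forall_apply_mem
    (isNilpotent_map_mul_add_flip hKnil) (by rintro _ ⟨a, ha, rfl⟩ x hx; exact hN a (hKN ha) x hx)
    hNK
  have isNilpotent_add : IsNilpotent (K + Submodule.span R {x}) :=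
    isNilpotent_add_span_singleton hKnil (hnil x hxN) fun a ha ↦ hx _ ⟨a, ha, rfl⟩
  have add_le : K + Submodule.span R {x} ≤ K :=
    hK.le_of_ge ⟨sup_le hKN (by simpa using hxN), isNilpotent_add⟩ le_sup_left
  exact absurd (add_le (Submodule.mem_sup_right (Submodule.mem_span_singleton_self x))) hxK

end Jacobson

section NilpotentSelfAdjoint

variable {R V : Type*} [CommRing R] [AddCommGroup V] [Module R V]
  {B : LinearMap.BilinForm R V} {N : Submodule R (Module.End R V)}

theorem apply_apply_eq_zero_of_mem_pow (hN : N ≤ B.selfAdjointSubmodule) {v : V}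
    (hv : ∀ f ∈ N, f v = 0) {k : ℕ} (hk : k ≠ 0) {g : Module.End R V} (hg : g ∈ N ^ k) (x : V) :
    B v (g x) = 0 := by
  obtain ⟨k, rfl⟩ := Nat.exists_eq_succ_of_ne_zero hk
  rw [pow_succ'] at hg
  induction hg using Submodule.mul_induction_on' with
  | mem_mul_mem f hf h _ => simp [← hN hf v (h x), hv f hf]
  | add g _ h _ hg hh => simp [hg, hh]

end NilpotentSelfAdjoint

section IsotropicVector

variable {K V : Type*} [Field K] [IsAlgClosed K] [NeZero (2 : K)] [AddCommGroup V] [Module K V]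

theorem exists_ne_zero_apply_self_eq_zero (B : LinearMap.BilinForm K V)
    (hV : 1 < Module.finrank K V) : ∃ v : V, v ≠ 0 ∧ B v v = 0 := by
  have : Nontrivial V := Module.nontrivial_of_finrank_pos (by omega : 0 < Module.finrank K V)
  obtain ⟨x, hx⟩ := exists_ne (0 : V)
  obtain ⟨y, hxy⟩ := exists_linearIndependent_pair_of_one_lt_finrank hV hx
  rw [LinearIndependent.pair_iff' hx] at hxy
  by_cases hxx : B x x = 0
  · exact ⟨x, hx, hxx⟩
  obtain ⟨t, ht⟩ := exists_quadratic_eq_zero (b := B x y + B y x) (c := B y y) hxx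
    (IsAlgClosed.exists_eq_mul_self _)
  refine ⟨y + t • x, fun h ↦ hxy (-t) ?_, ?_⟩
  · rw [neg_smul, ← eq_neg_of_add_eq_zero_left h]
  · simp only [map_add, map_smul, LinearMap.add_apply, LinearMap.smul_apply, smul_eq_mul]
    linear_combination ht

theorem exists_ne_zero_forall_apply_eq_zero [Nontrivial V] {B : LinearMap.BilinForm K V}
    {N : Submodule K (Module.End K V)} (hN : N ≤ B.selfAdjointSubmodule) (hnil : IsNilpotent N) :
    ∃ v : V, v ≠ 0 ∧ (∀ f ∈ N, f v = 0) ∧ (1 < Module.finrank K V → B v v = 0) := by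
  obtain ⟨k, hk⟩ := Nat.exists_eq_add_one.2 (pos_nilpotencyClass_iff.2 hnil)
  obtain ⟨pow_succ_eq_zero, pow_ne_zero⟩ := nilpotencyClass_eq_succ_iff.1 hk
  rcases eq_or_ne k 0 with rfl | hk
  · have eq_zero : N = 0 := by simpa using pow_succ_eq_zero
    obtain ⟨v, hv, hBv⟩ : ∃ v : V, v ≠ 0 ∧ (1 < Module.finrank K V → B v v = 0) := by
      by_cases hV : 1 < Module.finrank K V
      · exact (exists_ne_zero_apply_self_eq_zero B hV).imp fun v ↦ And.imp_right fun h _ ↦ h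
      · exact (exists_ne (0 : V)).imp fun v hv ↦ ⟨hv, (absurd · hV)⟩
    exact ⟨v, hv, by simp +contextual [eq_zero], hBv⟩
  · obtain ⟨g, hg, hg0⟩ := Submodule.exists_mem_ne_zero_of_ne_bot pow_ne_zero
    obtain ⟨u, hu⟩ := DFunLike.ne_iff.1 hg0
    have apply_eq_zero : ∀ f ∈ N, f (g u) = 0 := fun f hf ↦ by
      have : f * g ∈ N ^ (k + 1) := pow_succ' N k ▸ Submodule.mul_mem_mul hf hg
      rw [pow_succ_eq_zero, Submodule.zero_eq_bot, Submodule.mem_bot] at this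
      exact LinearMap.congr_fun this u
    exact ⟨g u, hu, apply_eq_zero, fun _ ↦ apply_apply_eq_zero_of_mem_pow hN apply_eq_zero hk hg u⟩

end IsotropicVector

/-- A hyperbolic pair of a bilinear form `B`: two isotropic vectors that pair to `1`. Both orders of
the pairing are recorded, so that the notion does not presuppose that `B` is symmetric. -/
structure IsHyperbolicPair {R V : Type*} [CommRing R] [AddCommGroup V] [Module R V]
    (B : LinearMap.BilinForm R V) (v w : V) : Prop where
  left_left : B v v = 0
  right_right : B w w = 0
  left_right : B v w = 1
  right_left : B w v = 1

/-- The common right kernel of `B v` and `B w`, which is the orthogonal complement of the plane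
spanned by `v` and `w`. -/
def pairComplement {R V : Type*} [CommRing R] [AddCommGroup V] [Module R V]
    (B : LinearMap.BilinForm R V) (v w : V) : Submodule R V :=
  ((B v).prod (B w)).ker

section HyperbolicPair

variable {R V : Type*} [CommRing R] [AddCommGroup V] [Module R V]
  {B : LinearMap.BilinForm R V} {v w : V}

theorem mem_pairComplement {x : V} : x ∈ pairComplement B v w ↔ B v x = 0 ∧ B w x = 0 := by
  simp [pairComplement]

namespace IsHyperbolicPair

/-- The projection onto the orthogonal complement of a hyperbolic plane along that plane. -/
def projection (h : IsHyperbolicPair B v w) : V →ₗ[R] pairComplement B v w :=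
  (LinearMap.id - (B w).smulRight v - (B v).smulRight w).codRestrict _ fun x ↦
    mem_pairComplement.2 (by
      simp [h.left_left, h.left_right, h.right_left, h.right_right])

theorem coe_projection (h : IsHyperbolicPair B v w) (x : V) :
    (h.projection x : V) = x - B w x • v - B v x • w :=
  rfl

theorem apply_projection (h : IsHyperbolicPair B v w) (hB : B.IsSymm)
    (x : pairComplement B v w) (y : V) : B x (h.projection y) = B x y := by
  obtain ⟨hv, hw⟩ := mem_pairComplement.1 x.2
  simp [h.coe_projection, hB.eq x, hv, hw]

theorem nondegenerate_restrict (h : IsHyperbolicPair B v w) (hB : B.IsSymm)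
    (hnd : B.Nondegenerate) : (B.restrict (pairComplement B v w)).Nondegenerate := by
  refine (hB.restrict _).isRefl.nondegenerate_iff_separatingLeft.2 fun x hx ↦ ?_
  refine Subtype.ext (hnd.1 x fun y ↦ ?_)
  rw [← h.apply_projection hB]
  exact hx (h.projection y)

/-- The compression of an endomorphism to the orthogonal complement of a hyperbolic plane. -/
def compression (h : IsHyperbolicPair B v w) :
    Module.End R V →ₗ[R] Module.End R (pairComplement B v w) :=
  LinearMap.llcomp R _ _ _ h.projection ∘ₗ LinearMap.lcomp R V (pairComplement B v w).subtype

theorem compression_apply (h : IsHyperbolicPair B v w) (f : Module.End R V)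
    (x : pairComplement B v w) : h.compression f x = h.projection (f x) :=
  rfl

theorem compression_mul (h : IsHyperbolicPair B v w) {f g : Module.End R V} (hf : f v = 0)
    (hg : ∀ x, B v (g x) = 0) :
    h.compression f * h.compression g = h.compression (f * g) := by
  ext x
  simp [compression_apply, coe_projection, hf, hg]

theorem compression_mem_selfAdjointSubmodule (h : IsHyperbolicPair B v w) (hB : B.IsSymm)
    {f : Module.End R V} (hf : f ∈ B.selfAdjointSubmodule) :
    h.compression f ∈ (B.restrict (pairComplement B v w)).selfAdjointSubmodule := by
  intro x y
  change B (h.projection (f x)) y = B x (h.projection (f y))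
  rw [hB.eq, h.apply_projection hB, h.apply_projection hB, hB.eq]
  exact hf x y

theorem map_compression_pow_le (h : IsHyperbolicPair B v w) {N : Submodule R (Module.End R V)}
    (hN : N ≤ B.selfAdjointSubmodule) (hv : ∀ f ∈ N, f v = 0) (k : ℕ) :
    N.map h.compression ^ (k + 1) ≤ (N ^ (k + 1)).map h.compression := by
  induction k with
  | zero => simp
  | succ k ih =>
    rw [pow_succ', Submodule.mul_le]
    rintro _ ⟨f, hf, rfl⟩ g' hg'
    obtain ⟨g, hg, rfl⟩ := ih hg'
    rw [h.compression_mul (hv f hf) (apply_apply_eq_zero_of_mem_pow hN hv k.succ_ne_zero hg),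
      pow_succ']
    exact Submodule.mem_map_of_mem (Submodule.mul_mem_mul hf hg)

theorem isNilpotent_map_compression (h : IsHyperbolicPair B v w)
    {N : Submodule R (Module.End R V)} (hN : N ≤ B.selfAdjointSubmodule)
    (hv : ∀ f ∈ N, f v = 0) (hnil : IsNilpotent N) : IsNilpotent (N.map h.compression) := by
  obtain ⟨k, hk⟩ := hnil
  refine ⟨k + 1, le_bot_iff.1 ((h.map_compression_pow_le hN hv k).trans ?_)⟩
  simp [pow_succ, hk]

end IsHyperbolicPair

end HyperbolicPair

section HyperbolicPairField

variable {K V : Type*} [Field K] [AddCommGroup V] [Module K V]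
  {B : LinearMap.BilinForm K V} {v w : V}

theorem IsHyperbolicPair.finrank_pairComplement_add_two [FiniteDimensional K V]
    (h : IsHyperbolicPair B v w) :
    Module.finrank K (pairComplement B v w) + 2 = Module.finrank K V := by
  have surjective : Function.Surjective ((B v).prod (B w)) := fun p ↦
    ⟨p.1 • w + p.2 • v, by simp [h.left_left, h.left_right, h.right_left, h.right_right]⟩
  rw [← ((B v).prod (B w)).finrank_range_add_finrank_ker, LinearMap.range_eq_top.2 surjective,
    finrank_top, Module.finrank_prod, Module.finrank_self, add_comm]
  rfl

theorem exists_isHyperbolicPair [NeZero (2 : K)] (hB : B.IsSymm) (hnd : B.Nondegenerate)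
    (hv : v ≠ 0) (hvv : B v v = 0) : ∃ w, IsHyperbolicPair B v w := by
  obtain ⟨u, hu⟩ : ∃ u, B v u ≠ 0 := by
    by_contra! h
    exact hv (hnd.1 v h)
  obtain ⟨u, hu⟩ : ∃ u, B v u = 1 := ⟨(B v u)⁻¹ • u, by simp [hu]⟩
  have hu' : B u v = 1 := hB.eq v u ▸ hu
  refine ⟨u - (B u u / 2) • v, hvv, ?_, by simp [hvv, hu], by simp [hvv, hu']⟩
  have two_ne_zero : (2 : K) ≠ 0 := NeZero.ne 2
  simp only [map_sub, map_smul, LinearMap.sub_apply, LinearMap.smul_apply, hvv, hu, hu',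
    smul_eq_mul]
  field_simp
  ring

end HyperbolicPairField

/-- The vectors `b 0, …, b (n - 1)` have the exchange matrix as Gram matrix for `B`, and every
`f ∈ N` becomes a matrix `B (b i) (f (b j))` vanishing on and below the antidiagonal. -/
structure IsAntitriangularFrame {R V : Type*} [CommRing R] [AddCommGroup V] [Module R V]
    (B : LinearMap.BilinForm R V) (N : Submodule R (Module.End R V)) {n : ℕ} (b : Fin n → V) :
    Prop where
  apply_apply (i j : Fin n) : B (b i) (b j) = if i.rev = j then 1 else 0
  apply_map_eq_zero {f : Module.End R V} (hf : f ∈ N) {i j : Fin n} (hij : i.rev ≤ j) :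
    B (b i) (f (b j)) = 0

theorem IsHyperbolicPair.isAntitriangularFrame_cons_snoc {R V : Type*} [CommRing R]
    [AddCommGroup V] [Module R V] {B : LinearMap.BilinForm R V} {v w : V}
    (h : IsHyperbolicPair B v w) (hB : B.IsSymm) {N : Submodule R (Module.End R V)}
    (hN : N ≤ B.selfAdjointSubmodule) (hv : ∀ f ∈ N, f v = 0) {n : ℕ}
    {b : Fin n → pairComplement B v w}
    (hb : IsAntitriangularFrame (B.restrict (pairComplement B v w)) (N.map h.compression) b) :
    IsAntitriangularFrame B N (Fin.cons w (Fin.snoc (fun i ↦ (b i : V)) v : Fin (n + 1) → V) :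
      Fin (n + 2) → V) where
  apply_apply i j := by
    have hvb (i) : B v (b i) = 0 := (mem_pairComplement.1 (b i).2).1
    have hwb (i) : B w (b i) = 0 := (mem_pairComplement.1 (b i).2).2
    have hbb (i j) : B (b i) (b j) = if i.rev = j then 1 else 0 := hb.apply_apply i j
    refine Fin.cases ?_ (Fin.lastCases ?_ fun i ↦ ?_) i <;>
      refine Fin.cases ?_ (Fin.lastCases ?_ fun j ↦ ?_) j <;>
      simp only [Fin.cons_zero, Fin.cons_succ, Fin.snoc_last, Fin.snoc_castSucc, h.left_left,
        h.left_right, h.right_left, h.right_right, hB.eq _ v, hB.eq _ w, hvb, hwb, hbb,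
        Fin.ext_iff, Fin.val_rev, Fin.val_zero, Fin.val_succ, Fin.val_castSucc, Fin.val_last] <;>
      grind
  apply_map_eq_zero {f} hf {i j} hij := by
    have hvf (x) : B v (f x) = 0 := by simp [← hN hf v x, hv f hf]
    have hbb {i j : Fin n} (hij : i.rev ≤ j) : B (b i) (f (b j)) = 0 := by
      rw [← h.apply_projection hB]
      exact hb.apply_map_eq_zero ⟨f, hf, rfl⟩ hij
    revert hij
    refine Fin.cases ?_ (Fin.lastCases ?_ fun i ↦ ?_) i <;>
      refine Fin.cases ?_ (Fin.lastCases ?_ fun j ↦ ?_) j <;>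
      simp only [Fin.cons_zero, Fin.cons_succ, Fin.snoc_last, Fin.snoc_castSucc, hv f hf, hvf,
        map_zero, implies_true, Fin.le_def, Fin.val_rev, Fin.val_succ, Fin.val_castSucc,
        Fin.val_zero]
    · omega
    · omega
    · omega
    · exact fun hij ↦ hbb (by rw [Fin.le_def, Fin.val_rev]; omega)

theorem exists_isAntitriangularFrame {K V : Type*} [Field K] [IsAlgClosed K] [NeZero (2 : K)]
    [AddCommGroup V] [Module K V] [FiniteDimensional K V] {B : LinearMap.BilinForm K V}
    (hB : B.IsSymm) (hnd : B.Nondegenerate) {N : Submodule K (Module.End K V)}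
    (hN : N ≤ B.selfAdjointSubmodule) (hnil : IsNilpotent N) {n : ℕ}
    (hn : Module.finrank K V = n) : ∃ b : Fin n → V, IsAntitriangularFrame B N b := by
  induction n using Nat.twoStepInduction generalizing V with
  | zero => exact ⟨Fin.elim0, ⟨fun i ↦ i.elim0, fun _ i ↦ i.elim0⟩⟩
  | one =>
    have : Nontrivial V := Module.nontrivial_of_finrank_pos (R := K) (by omega)
    obtain ⟨v, hv, hNv, -⟩ := exists_ne_zero_forall_apply_eq_zero hN hnil
    have hvv : B v v ≠ 0 := fun hvv ↦ hv <| hnd.1 v fun x ↦ by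
      obtain ⟨c, rfl⟩ := (finrank_eq_one_iff_of_nonzero' v hv).1 hn x
      simp [hvv]
    obtain ⟨c, hc⟩ := IsAlgClosed.exists_eq_mul_self (B v v)
    have hc0 : c ≠ 0 := by rintro rfl; simp [hc] at hvv
    refine ⟨fun _ ↦ c⁻¹ • v, ⟨fun i j ↦ ?_, fun {f} hf _ _ _ ↦ by simp [hNv f hf]⟩⟩
    simp [hc, hc0, Subsingleton.elim i.rev j]
  | more n ih _ =>
    have : Nontrivial V := Module.nontrivial_of_finrank_pos (R := K) (by omega)
    obtain ⟨v, hv, hNv, hvv⟩ := exists_ne_zero_forall_apply_eq_zero hN hnil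
    obtain ⟨w, hvw⟩ := exists_isHyperbolicPair hB hnd hv (hvv (by omega))
    have map_le : N.map hvw.compression ≤
        (B.restrict (pairComplement B v w)).selfAdjointSubmodule := by
      rintro _ ⟨f, hf, rfl⟩
      exact hvw.compression_mem_selfAdjointSubmodule hB (hN hf)
    obtain ⟨b, hb⟩ := ih (hB.restrict _) (hvw.nondegenerate_restrict hB hnd) map_le
      (hvw.isNilpotent_map_compression hN hNv hnil)
      (Nat.add_right_cancel (hvw.finrank_pairComplement_add_two.trans hn))
    exact ⟨_, hvw.isAntitriangularFrame_cons_snoc hB hN hNv hb⟩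

section CommRing

variable {S : Type*} [CommRing S]

theorem isUnit_or_isNilpotent_of_forall_isIdempotentElem [IsArtinianRing S]
    (h : ∀ e : S, IsIdempotentElem e → e = 0 ∨ e = 1) (a : S) : IsUnit a ∨ IsNilpotent a := by
  obtain ⟨k, y, hy⟩ := IsArtinian.exists_pow_succ_smul_dvd a (1 : S)
  have pow_mul_mul : a ^ k * (a * y) = a ^ k := by
    simpa [pow_succ, mul_assoc] using hy
  have pow_mul_pow (i : ℕ) : a ^ k * (a * y) ^ i = a ^ k := by
    induction i with
    | zero => simp
    | succ i ih => rw [pow_succ', ← mul_assoc, pow_mul_mul, ih]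
  have isIdempotentElem : IsIdempotentElem ((a * y) ^ (k + 1)) := by
    calc (a * y) ^ (k + 1) * (a * y) ^ (k + 1)
        = a ^ k * (a * y) ^ (k + 1) * (a * y ^ (k + 1)) := by ring
      _ = (a * y) ^ (k + 1) := by rw [pow_mul_pow]; ring
  rcases h _ isIdempotentElem with h | h
  · exact .inr ⟨k, by rw [← pow_mul_pow (k + 1), h, mul_zero]⟩
  · exact .inl (isUnit_of_mul_isUnit_left (IsUnit.of_pow_eq_one h k.succ_ne_zero))

variable {K : Type*} [Field K] [Algebra K S] {x : S} {c : K}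

theorem isUnit_of_isNilpotent_sub_algebraMap (hc : c ≠ 0)
    (hx : IsNilpotent (x - algebraMap K S c)) : IsUnit x := by
  simpa using hx.isUnit_add_right_of_commute ((IsUnit.mk0 c hc).map (algebraMap K S)) (.all _ _)

theorem isSquare_of_isNilpotent_sub_algebraMap [IsAlgClosed K] [NeZero (2 : K)] (hc : c ≠ 0)
    (hx : IsNilpotent (x - algebraMap K S c)) : IsSquare x := by
  obtain ⟨d, rfl⟩ := IsAlgClosed.exists_eq_mul_self c
  let p : Polynomial S := .X ^ 2 - .C x
  have isNilpotent_aeval : IsNilpotent (Polynomial.aeval (algebraMap K S d) p) := by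
    simpa [p, sq] using hx.neg
  have isUnit_aeval : IsUnit (Polynomial.aeval (algebraMap K S d) p.derivative) := by
    have two_mul_ne_zero : 2 * d ≠ 0 := mul_ne_zero (NeZero.ne 2) (left_ne_zero_of_mul hc)
    simpa [p, one_add_one_eq_two, map_ofNat (algebraMap K S) 2]
      using (IsUnit.mk0 _ two_mul_ne_zero).map (algebraMap K S)
  obtain ⟨r, ⟨-, hr⟩, -⟩ :=
    Polynomial.existsUnique_nilpotent_sub_and_aeval_eq_zero isNilpotent_aeval isUnit_aeval
  exact ⟨r, by simpa [p, sub_eq_zero, sq, eq_comm] using hr⟩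

end CommRing

namespace IsJordanClosed

variable {K E : Type*} [Field K] [NeZero (2 : K)] [Ring E] [Algebra K E] {M : Submodule K E}
  {a b : E}

theorem mul_mem_of_commute (hM : IsJordanClosed M) (ha : a ∈ M) (hb : b ∈ M)
    (hab : Commute a b) : a * b ∈ M := by
  rw [← M.smul_mem_iff (NeZero.ne (2 : K)), two_smul]
  nth_rw 2 [hab.eq]
  exact hM a ha b hb

theorem mul_mul_mem (hM : IsJordanClosed M) (ha : a ∈ M) (hb : b ∈ M) : a * b * a ∈ M := by
  have mem := sub_mem (hM a ha _ (hM a ha b hb))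
    (hM _ (hM.mul_mem_of_commute ha ha (Commute.refl a)) b hb)
  rw [← M.smul_mem_iff (NeZero.ne (2 : K)), two_smul]
  convert! mem using 1
  noncomm_ring

theorem adjoin_singleton_le (hM : IsJordanClosed M) (one_mem : 1 ∈ M) (ha : a ∈ M) :
    Subalgebra.toSubmodule (Algebra.adjoin K {a}) ≤ M := by
  have pow_mem (k : ℕ) : a ^ k ∈ M := by
    induction k with
    | zero => simpa using one_mem
    | succ k ih =>
      rw [pow_succ]
      exact hM.mul_mem_of_commute ih ha (Commute.pow_self a k)
  rw [Algebra.adjoin_eq_span, Submodule.span_le]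
  intro x hx
  obtain ⟨k, rfl⟩ := Submonoid.mem_closure_singleton.1 hx
  exact pow_mem k

end IsJordanClosed

/-- `M` is a Jordan subalgebra of the associative algebra `E`, containing `1`, in which `1` is a
primitive idempotent. -/
structure IsPrimitiveJordan {K E : Type*} [Field K] [Ring E] [Algebra K E]
    (M : Submodule K E) : Prop where
  one_mem : 1 ∈ M
  isJordanClosed : IsJordanClosed M
  eq_zero_or_eq_one {e : E} (he : e ∈ M) (h : IsIdempotentElem e) : e = 0 ∨ e = 1

namespace IsPrimitiveJordan

open scoped IsMulCommutative

variable {K E : Type*} [Field K] [NeZero (2 : K)] [Ring E] [Algebra K E]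
  [FiniteDimensional K E] {M : Submodule K E} {a b : E}

theorem isUnit_or_isNilpotent (hM : IsPrimitiveJordan M) (ha : a ∈ M) :
    IsUnit a ∨ IsNilpotent a := by
  let S := Algebra.adjoin K {a}
  have : IsArtinianRing S := IsArtinianRing.of_finite K S
  have eq_zero_or_eq_one (e : S) (he : IsIdempotentElem e) : e = 0 ∨ e = 1 := by
    simpa using hM.eq_zero_or_eq_one
      (hM.isJordanClosed.adjoin_singleton_le hM.one_mem ha e.2) (he.map S.val)
  exact (isUnit_or_isNilpotent_of_forall_isIdempotentElem eq_zero_or_eq_one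
    ⟨a, Algebra.self_mem_adjoin_singleton K a⟩).imp (·.map S.val) (·.map S.val)

variable [IsAlgClosed K]

theorem exists_isNilpotent_sub_algebraMap (hM : IsPrimitiveJordan M) (ha : a ∈ M) :
    ∃ c : K, IsNilpotent (a - algebraMap K E c) := by
  nontriviality E
  obtain ⟨c, hc⟩ := spectrum.nonempty_of_isAlgClosed_of_finiteDimensional K a
  have mem : a - algebraMap K E c ∈ M :=
    sub_mem ha (Algebra.algebraMap_eq_smul_one (A := E) c ▸ M.smul_mem c hM.one_mem)
  refine ⟨c, (hM.isUnit_or_isNilpotent mem).resolve_left fun h ↦ hc ?_⟩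
  simpa [spectrum.mem_resolventSet_iff] using h.neg

theorem exists_units_mul_mul_eq_one (hM : IsPrimitiveJordan M) (ha : a ∈ M) (hu : IsUnit a) :
    ∃ s : Eˣ, (s : E) ∈ M ∧ s * a * s = 1 := by
  nontriviality E
  obtain ⟨c, hc⟩ := hM.exists_isNilpotent_sub_algebraMap ha
  have c_ne_zero : c ≠ 0 := by
    rintro rfl
    exact hu.not_isNilpotent (by simpa using hc)
  let S := Algebra.adjoin K {a}
  let x : S := ⟨a, Algebra.self_mem_adjoin_singleton K a⟩
  have hx : IsNilpotent (x - algebraMap K S c) :=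
    (IsNilpotent.map_iff (f := S.val) Subtype.val_injective).1 (by simpa using hc)
  obtain ⟨w, hw⟩ := isSquare_of_isNilpotent_sub_algebraMap c_ne_zero hx
  obtain ⟨w, rfl⟩ : IsUnit w :=
    isUnit_of_mul_isUnit_left (hw ▸ isUnit_of_isNilpotent_sub_algebraMap c_ne_zero hx)
  have mul_mul_eq_one : ↑w⁻¹ * x * ↑w⁻¹ = 1 := by simp [hw]
  have inv_mem : ((↑w⁻¹ : S) : E) ∈ M :=
    hM.isJordanClosed.adjoin_singleton_le hM.one_mem ha (↑w⁻¹ : S).2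
  exact ⟨Units.map (S.val : S →* E) w⁻¹, inv_mem, congrArg Subtype.val mul_mul_eq_one⟩

theorem isNilpotent_add (hM : IsPrimitiveJordan M) (ha : a ∈ M) (hb : b ∈ M)
    (hanil : IsNilpotent a) (hbnil : IsNilpotent b) : IsNilpotent (a + b) := by
  nontriviality E
  refine (hM.isUnit_or_isNilpotent (add_mem ha hb)).resolve_left fun isUnit_add ↦ ?_
  obtain ⟨s, hs, mul_mul_eq_one⟩ := hM.exists_units_mul_mul_eq_one (add_mem ha hb) isUnit_add
  have isNilpotent_conj {x : E} (hx : x ∈ M) (hxnil : IsNilpotent x) :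
      IsNilpotent (s * x * s) :=
    (hM.isUnit_or_isNilpotent (hM.isJordanClosed.mul_mul_mem hs hx)).resolve_left fun h ↦
      hxnil.not_isUnit (by simpa using h)
  have eq_one_sub : s * a * s = 1 - s * b * s := by rw [← mul_mul_eq_one]; noncomm_ring
  exact (eq_one_sub ▸ (isNilpotent_conj hb hbnil).isUnit_one_sub).not_isNilpotent
    (isNilpotent_conj ha hanil)

/-- The nilpotent elements of a Jordan algebra with primitive unit; they form a subspace. -/
def nilradical (hM : IsPrimitiveJordan M) : Submodule K E where
  carrier := {a | a ∈ M ∧ IsNilpotent a}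
  zero_mem' := ⟨zero_mem M, .zero⟩
  add_mem' ha hb := ⟨add_mem ha.1 hb.1, hM.isNilpotent_add ha.1 hb.1 ha.2 hb.2⟩
  smul_mem' c _ ha := ⟨M.smul_mem c ha.1, ha.2.smul c⟩

theorem nilradical_le (hM : IsPrimitiveJordan M) : hM.nilradical ≤ M :=
  fun _ ha ↦ ha.1

theorem isJordanClosed_nilradical (hM : IsPrimitiveJordan M) :
    IsJordanClosed hM.nilradical := by
  have mul_self_mem {a : E} (ha : a ∈ hM.nilradical) : a * a ∈ hM.nilradical :=
    ⟨hM.isJordanClosed.mul_mem_of_commute ha.1 ha.1 (.refl a),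
      (Commute.refl a).isNilpotent_mul_left ha.2⟩
  intro a ha b hb
  have : a * b + b * a = (a + b) * (a + b) - a * a - b * b := by noncomm_ring
  rw [this]
  exact sub_mem (sub_mem (mul_self_mem (add_mem ha hb)) (mul_self_mem ha)) (mul_self_mem hb)

theorem isNilpotent_nilradical (hM : IsPrimitiveJordan M) : IsNilpotent hM.nilradical :=
  hM.isJordanClosed_nilradical.isNilpotent fun _ ha ↦ ha.2

theorem span_one_sup_nilradical (hM : IsPrimitiveJordan M) :
    Submodule.span K {1} ⊔ hM.nilradical = M := by
  apply le_antisymm (sup_le (by simpa using hM.one_mem) hM.nilradical_le)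
  intro a ha
  obtain ⟨c, hc⟩ := hM.exists_isNilpotent_sub_algebraMap ha
  rw [Algebra.algebraMap_eq_smul_one] at hc
  exact Submodule.mem_sup.2 ⟨c • 1, Submodule.smul_mem _ c (Submodule.mem_span_singleton_self 1),
    a - c • 1, ⟨sub_mem ha (M.smul_mem c hM.one_mem), hc⟩, by abel⟩

end IsPrimitiveJordan

section JordanProduct

variable {K ι : Type*} [Field K] [Fintype ι] [DecidableEq ι]

/-- The Jordan product `X •_U Y` with unit `U`, over an arbitrary field. -/
def jordanMul (U X Y : Matrix ι ι K) : Matrix ι ι K :=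
  (1 / 2 : K) • (X * U⁻¹ * Y + Y * U⁻¹ * X)

variable {U : Matrix ι ι K} {L : Submodule K (Matrix ι ι K)}

theorem map_mulLeft_map_mulLeft_inv (hU : IsUnit U.det) :
    (L.map (LinearMap.mulLeft K U⁻¹)).map (LinearMap.mulLeft K U) = L := by
  rw [← Submodule.map_comp, ← LinearMap.mulLeft_mul, mul_nonsing_inv U hU, LinearMap.mulLeft_one,
    Submodule.map_id]

theorem map_mulLeft_inv_le_selfAdjointMatricesSubmodule (hU : IsUnit U.det) (hsymm : U.IsSymm)
    (hL : ∀ X ∈ L, X.IsSymm) :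
    L.map (LinearMap.mulLeft K U⁻¹) ≤ selfAdjointMatricesSubmodule U := by
  rintro _ ⟨X, hX, rfl⟩
  rw [mem_selfAdjointMatricesSubmodule, LinearMap.mulLeft_apply, Matrix.IsSelfAdjoint,
    Matrix.IsAdjointPair, transpose_mul, transpose_nonsing_inv, hsymm.eq, (hL X hX).eq, mul_assoc,
    nonsing_inv_mul U hU, mul_one, ← mul_assoc, mul_nonsing_inv U hU, one_mul]

variable [NeZero (2 : K)]

theorem two_smul_inv_mul_jordanMul (X Y : Matrix ι ι K) :
    (2 : K) • (U⁻¹ * jordanMul U X Y) = U⁻¹ * X * (U⁻¹ * Y) + U⁻¹ * Y * (U⁻¹ * X) := by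
  simp [jordanMul, smul_smul, mul_add, mul_assoc, NeZero.ne (2 : K)]

theorem isJordanClosed_map_mulLeft_inv (hL : ∀ X ∈ L, ∀ Y ∈ L, jordanMul U X Y ∈ L) :
    IsJordanClosed (L.map (LinearMap.mulLeft K U⁻¹)) := by
  rintro _ ⟨X, hX, rfl⟩ _ ⟨Y, hY, rfl⟩
  refine ⟨(2 : K) • jordanMul U X Y, L.smul_mem 2 (hL X hX Y hY), ?_⟩
  simpa using two_smul_inv_mul_jordanMul X Y

theorem jordanMul_eq_iff (hU : IsUnit U.det) {X Y Z : Matrix ι ι K} : jordanMul U X Y = Z ↔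
    U⁻¹ * X * (U⁻¹ * Y) + U⁻¹ * Y * (U⁻¹ * X) = (2 : K) • (U⁻¹ * Z) := by
  have isUnit_inv : IsUnit U⁻¹ := (isUnit_iff_isUnit_det _).2 (isUnit_nonsing_inv_det U hU)
  rw [← two_smul_inv_mul_jordanMul, (smul_right_injective _ (NeZero.ne (2 : K))).eq_iff,
    isUnit_inv.mul_right_inj]

theorem isPrimitiveJordan_map_mulLeft_inv (hU : IsUnit U.det) (hUL : U ∈ L)
    (hclosed : ∀ X ∈ L, ∀ Y ∈ L, jordanMul U X Y ∈ L)
    (hprim : ¬ ∃ X₁ X₂, X₁ ∈ L ∧ X₂ ∈ L ∧ X₁ ≠ 0 ∧ X₂ ≠ 0 ∧ jordanMul U X₁ X₁ = X₁ ∧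
      jordanMul U X₂ X₂ = X₂ ∧ jordanMul U X₁ X₂ = 0 ∧ X₁ + X₂ = U) :
    IsPrimitiveJordan (L.map (LinearMap.mulLeft K U⁻¹)) where
  one_mem := ⟨U, hUL, nonsing_inv_mul U hU⟩
  isJordanClosed := isJordanClosed_map_mulLeft_inv hclosed
  eq_zero_or_eq_one := by
    rintro _ ⟨X, hX, rfl⟩ he
    by_contra! h
    obtain ⟨X_ne_zero, sub_ne_zero⟩ : X ≠ 0 ∧ U - X ≠ 0 :=
      ⟨by rintro rfl; simp at h, fun hUX ↦ h.2 <| by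
        simp [← sub_eq_zero.1 hUX, nonsing_inv_mul U hU]⟩
    have inv_mul_sub : U⁻¹ * (U - X) = 1 - U⁻¹ * X := by rw [mul_sub, nonsing_inv_mul U hU]
    have he : U⁻¹ * X * (U⁻¹ * X) = U⁻¹ * X := he
    refine hprim ⟨X, U - X, hX, sub_mem hUL hX, X_ne_zero, sub_ne_zero, ?_, ?_, ?_,
      add_sub_cancel X U⟩ <;>
      rw [jordanMul_eq_iff hU]
    · rw [he, two_smul]
    · rw [inv_mul_sub, (IsIdempotentElem.one_sub he).eq, two_smul]
    · simp [inv_mul_sub, mul_sub, sub_mul, he]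

end JordanProduct

/-- The matrix `Jₙ` with ones on the antidiagonal, as the permutation matrix of the reversal. -/
def exchangeMatrix (K : Type*) [Zero K] [One K] (n : ℕ) : Matrix (Fin n) (Fin n) K :=
  Fin.revPerm.permMatrix K

section Congruence

variable {K : Type*} [Field K] {n : ℕ}

theorem exchangeMatrix_apply (i j : Fin n) :
    exchangeMatrix K n i j = if i.rev = j then 1 else 0 := by
  simp [exchangeMatrix, Equiv.toPEquiv_apply, PEquiv.toMatrix_apply, eq_comm]

theorem isUnit_det_exchangeMatrix : IsUnit (exchangeMatrix K n).det := by
  rw [exchangeMatrix, det_permutation]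
  exact (Equiv.Perm.sign _).isUnit.map (Int.castRingHom K)

theorem disjoint_span_exchangeMatrix {L : Submodule K (Matrix (Fin n) (Fin n) K)}
    (hL : ∀ A ∈ L, ∀ i j : Fin n, i.rev ≤ j → A i j = 0) :
    Disjoint (Submodule.span K {exchangeMatrix K n}) L := by
  rw [Submodule.disjoint_def]
  rintro _ hspan hmem
  obtain ⟨c, rfl⟩ := Submodule.mem_span_singleton.1 hspan
  ext i j
  have c_eq_zero : c = 0 := by simpa [exchangeMatrix_apply] using hL _ hmem i i.rev le_rfl
  simp [c_eq_zero]

theorem exists_mul_mul_transpose_eq_exchangeMatrix [IsAlgClosed K] [NeZero (2 : K)]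
    {U : Matrix (Fin n) (Fin n) K} (hU : IsUnit U.det) (hsymm : U.IsSymm)
    {N : Submodule K (Matrix (Fin n) (Fin n) K)} (hN : N ≤ selfAdjointMatricesSubmodule U)
    (hnil : IsNilpotent N) :
    ∃ P : Matrix (Fin n) (Fin n) K, IsUnit P.det ∧ P * U * Pᵀ = exchangeMatrix K n ∧
      ∀ A ∈ N, ∀ i j : Fin n, i.rev ≤ j → (P * (U * A) * Pᵀ) i j = 0 := by
  let toEnd : Matrix (Fin n) (Fin n) K →ₐ[K] Module.End K (Fin n → K) := toLinAlgEquiv'.toAlgHom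
  let N' : Submodule K (Module.End K (Fin n → K)) := N.map toEnd.toLinearMap
  have N'_le : N' ≤ U.toBilin'.selfAdjointSubmodule := by
    rintro _ ⟨A, hA, rfl⟩
    exact (isAdjointPair_toLinearMap₂' U U A A).2 ((mem_selfAdjointMatricesSubmodule U A).1 (hN hA))
  obtain ⟨b, hb⟩ := exists_isAntitriangularFrame (isSymm_toBilin'_iff_isSymm.2 hsymm)
    (LinearMap.BilinForm.nondegenerate_toBilin'_of_det_ne_zero' U hU.ne_zero) N'_le
    (hnil.map (Submodule.mapHom toEnd)) (Module.finrank_fin_fun K)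
  have mul_mul_eq : of b * U * (of b)ᵀ = exchangeMatrix K n := by
    ext i j
    rw [mul_mul_apply, exchangeMatrix_apply, ← hb.apply_apply, toBilin'_apply']
    rfl
  refine ⟨of b, ?_, mul_mul_eq, fun A hA i j hij ↦ ?_⟩
  · have isUnit_det := isUnit_det_exchangeMatrix (K := K) (n := n)
    rw [← mul_mul_eq, mul_assoc, det_mul] at isUnit_det
    exact isUnit_of_mul_isUnit_left isUnit_det
  · rw [mul_mul_apply, ← mulVec_mulVec, ← hb.apply_map_eq_zero ⟨A, hA, rfl⟩ hij, toBilin'_apply']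
    rfl

end Congruence

theorem stmt9_general {K : Type*} [Field K] [IsAlgClosed K] [NeZero (2 : K)] {n : ℕ}
    {U : Matrix (Fin n) (Fin n) K} (hU : IsUnit U.det)
    {L : Submodule K (Matrix (Fin n) (Fin n) K)} (hsym : ∀ X ∈ L, X.IsSymm) (hUL : U ∈ L)
    (hclosed : ∀ X ∈ L, ∀ Y ∈ L, jordanMul U X Y ∈ L)
    (hprim : ¬ ∃ X₁ X₂, X₁ ∈ L ∧ X₂ ∈ L ∧ X₁ ≠ 0 ∧ X₂ ≠ 0 ∧ jordanMul U X₁ X₁ = X₁ ∧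
      jordanMul U X₂ X₂ = X₂ ∧ jordanMul U X₁ X₂ = 0 ∧ X₁ + X₂ = U) :
    ∃ P : Matrix (Fin n) (Fin n) K, IsUnit P.det ∧
      ∃ L' : Submodule K (Matrix (Fin n) (Fin n) K),
        (∀ A ∈ L', ∀ i j : Fin n, i.rev ≤ j → A i j = 0) ∧
        L.map (LinearMap.mulLeftRight K (P, Pᵀ)) =
          Submodule.span K {exchangeMatrix K n} ⊔ L' ∧
        Disjoint (Submodule.span K {exchangeMatrix K n}) L' := by
  have hM := isPrimitiveJordan_map_mulLeft_inv hU hUL hclosed hprim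
  have nilradical_le : hM.nilradical ≤ selfAdjointMatricesSubmodule U :=
    hM.nilradical_le.trans (map_mulLeft_inv_le_selfAdjointMatricesSubmodule hU (hsym U hUL) hsym)
  obtain ⟨P, hP, hPU, hPN⟩ := exists_mul_mul_transpose_eq_exchangeMatrix hU (hsym U hUL)
    nilradical_le hM.isNilpotent_nilradical
  let φ := LinearMap.mulLeftRight K (P, Pᵀ) ∘ₗ LinearMap.mulLeft K U
  have L'_antitriangular : ∀ A ∈ hM.nilradical.map φ, ∀ i j : Fin n, i.rev ≤ j → A i j = 0 := by
    rintro _ ⟨A, hA, rfl⟩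
    exact hPN A hA
  refine ⟨P, hP, hM.nilradical.map φ, L'_antitriangular, ?_,
    disjoint_span_exchangeMatrix L'_antitriangular⟩
  nth_rw 1 [← map_mulLeft_map_mulLeft_inv hU (L := L), ← hM.span_one_sup_nilradical]
  rw [← Submodule.map_comp, Submodule.map_sup, Submodule.map_span, Set.image_singleton]
  simp [φ, hPU]

theorem Jmat_eq_exchangeMatrix (n : ℕ) : Jmat n = exchangeMatrix ℂ n := by
  ext i j
  rw [Jmat, of_apply, exchangeMatrix_apply]
  exact if_congr (by rw [Fin.ext_iff, Fin.val_rev]; omega) rfl rfl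

/-- If the unit `U` of a Jordan subalgebra `L ⊆ Sⁿ` is a primitive idempotent, then
`L` is congruent to `ℂ·Jₙ ⊕ L′` where `L′` consists of upper anti-triangular
matrices (`0`-indexed: `A i j = 0` whenever `i + j ≥ n - 1`, i.e. `1`-indexed
`i + j ≥ n + 1`). -/
theorem stmt9 {n : ℕ} (U : Mat n) (hU : IsUnit U.det)
    (L : Submodule ℂ (Mat n)) (hsym : ∀ X ∈ L, Matrix.IsSymm X)
    (hUL : U ∈ L) (hclosed : ∀ X ∈ L, ∀ Y ∈ L, jmul U X Y ∈ L)
    (hprim : ¬ ∃ X₁ X₂ : Mat n, X₁ ∈ L ∧ X₂ ∈ L ∧ X₁ ≠ 0 ∧ X₂ ≠ 0 ∧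
      jmul U X₁ X₁ = X₁ ∧ jmul U X₂ X₂ = X₂ ∧ jmul U X₁ X₂ = 0 ∧ X₁ + X₂ = U) :
    ∃ P : Mat n, IsUnit P.det ∧ ∃ L' : Submodule ℂ (Mat n),
      (∀ A ∈ L', ∀ i j : Fin n, n - 1 ≤ (i : ℕ) + (j : ℕ) → A i j = 0) ∧
      Submodule.map (congMap P) L = Submodule.span ℂ {Jmat n} ⊔ L' ∧
      Disjoint (Submodule.span ℂ {Jmat n}) L' := by
  obtain ⟨P, hP, L', hL', hmap, hdisj⟩ := stmt9_general hU hsym hUL hclosed hprim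
  rw [← Jmat_eq_exchangeMatrix] at hmap hdisj
  exact ⟨P, hP, L', fun A hA i j hij ↦
    hL' A hA i j (by rw [Fin.le_def, Fin.val_rev]; omega), hmap, hdisj⟩
end
end
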